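/- Norm of the basis elements (Theorem 5.2 of the paper, realized on the degree-d representation): let p, q, d be natural numbers and let T = a₋^p ∘ a₊^p ∘ b₊^q ∘ b₋^q ∈ E. Then (i) for every 0 ≤ j ≤ d, T(x^(d−j)·y^j) = λ_j · x^(d−j)·y^j, where λ_j = ε^(p+q) · ((d−j+p)!/(d−j)!) · (j!/(j−q)!) if j ≥ q and λ_j = 0 if j < q; and (ii) the average satisfies (1/(d+1)) · Σ_{j=0}^{d} λ_j = (p!·q!/(p+q+1)!) · Π_{s=1}^{q} (ε(d+1) − ε·s) · Π_{s=1}^{p} (ε(d+1) + ε·s). (In the paper's notation this average is ‖ξ(n,r,m)‖² with n = (p+q)/2, r = (p−q)/2 and 2R̂ = ε(d+1).) -/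

import Mathlib

open MvPolynomial

noncomputable section

/-- The polynomial ring ℂ[x,y]. -/
abbrev P2 : Type := MvPolynomial (Fin 2) ℂ

/-- The algebra of ℂ-linear endomorphisms of ℂ[x,y]. -/
abbrev E : Type := Module.End ℂ P2

/-- `a₊` : multiplication by `x`. -/
def aP : E := LinearMap.mulLeft ℂ (X 0 : P2)

/-- `b₊` : multiplication by `y`. -/
def bP : E := LinearMap.mulLeft ℂ (X 1 : P2)

/-- `a₋ = ε ∂/∂x`. -/
def aM (ε : ℝ) : E := (ε : ℂ) • (pderiv (0 : Fin 2)).toLinearMap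

/-- `b₋ = ε ∂/∂y`. -/
def bM (ε : ℝ) : E := (ε : ℂ) • (pderiv (1 : Fin 2)).toLinearMap

def J0 (ε : ℝ) : E := (1/2 : ℂ) • (aP * aM ε - bP * bM ε)
def Jp (ε : ℝ) : E := aP * bM ε
def Jm (ε : ℝ) : E := aM ε * bP
def K0 (ε : ℝ) : E := (1/2 : ℂ) • (aP * aM ε + bP * bM ε + (ε : ℂ) • (1 : E))
def Kp : E := aP * bP
def Km (ε : ℝ) : E := aM ε * bM ε

/-- The eigenvalue `λ_j = ε^(p+q)·((d−j+p)!/(d−j)!)·(j!/(j−q)!)` for `j ≥ q`,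
and `λ_j = 0` for `j < q`. -/
def lam (ε : ℝ) (p q d j : ℕ) : ℂ :=
  if q ≤ j then
    (ε : ℂ) ^ (p + q) * (((d - j + p).factorial : ℂ) / ((d - j).factorial : ℂ)) *
      ((j.factorial : ℂ) / ((j - q).factorial : ℂ))
  else 0

theorem aP_pow_apply (k m n : ℕ) :
    (aP ^ k) ((X 0 : P2) ^ m * X 1 ^ n) = X 0 ^ (m + k) * X 1 ^ n := by
  simp only [aP, LinearMap.pow_mulLeft, LinearMap.mulLeft_apply]
  ring

theorem bP_pow_apply (k m n : ℕ) :
    (bP ^ k) ((X 0 : P2) ^ m * X 1 ^ n) = X 0 ^ m * X 1 ^ (n + k) := by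
  simp only [bP, LinearMap.pow_mulLeft, LinearMap.mulLeft_apply]
  ring

theorem aM_apply (ε : ℝ) (m n : ℕ) :
    aM ε ((X 0 : P2) ^ m * X 1 ^ n) = ((ε : ℂ) * m) • ((X 0 : P2) ^ (m - 1) * X 1 ^ n) := by
  simp [aM, Derivation.leibniz, Derivation.leibniz_pow, pderiv_X, smul_eq_C_mul]
  ring

theorem bM_apply (ε : ℝ) (m n : ℕ) :
    bM ε ((X 0 : P2) ^ m * X 1 ^ n) = ((ε : ℂ) * n) • ((X 0 : P2) ^ m * X 1 ^ (n - 1)) := by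
  simp [bM, Derivation.leibniz, Derivation.leibniz_pow, pderiv_X, smul_eq_C_mul]
  ring

theorem aM_pow_apply (ε : ℝ) (k m n : ℕ) :
    (aM ε ^ k) ((X 0 : P2) ^ m * X 1 ^ n) =
      ((ε : ℂ) ^ k * m.descFactorial k) • ((X 0 : P2) ^ (m - k) * X 1 ^ n) := by
  induction k with
  | zero => simp
  | succ k ih =>
    rw [pow_succ', Module.End.mul_apply, ih, map_smul, aM_apply, smul_smul, Nat.sub_sub,
      Nat.descFactorial_succ]
    congr 1
    push_cast
    ring

theorem bM_pow_apply (ε : ℝ) (k m n : ℕ) :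
    (bM ε ^ k) ((X 0 : P2) ^ m * X 1 ^ n) =
      ((ε : ℂ) ^ k * n.descFactorial k) • ((X 0 : P2) ^ m * X 1 ^ (n - k)) := by
  induction k with
  | zero => simp
  | succ k ih =>
    rw [pow_succ', Module.End.mul_apply, ih, map_smul, bM_apply, smul_smul, Nat.sub_sub,
      Nat.descFactorial_succ]
    congr 1
    push_cast
    ring

theorem lam_eq_descFactorial (ε : ℝ) (p q d j : ℕ) :
    lam ε p q d j =
      (ε : ℂ) ^ (p + q) * (d - j + p).descFactorial p * j.descFactorial q := by
  unfold lam
  split_ifs with h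
  · rw [← Nat.factorial_mul_descFactorial h,
      ← Nat.factorial_mul_descFactorial (Nat.le_add_left p (d - j)), Nat.add_sub_cancel]
    have h₁ : ((d - j).factorial : ℂ) ≠ 0 := mod_cast Nat.factorial_ne_zero _
    have h₂ : ((j - q).factorial : ℂ) ≠ 0 := mod_cast Nat.factorial_ne_zero _
    push_cast
    field_simp
  · simp [Nat.descFactorial_of_lt (not_le.mp h)]

/-- A Vandermonde-type convolution of binomial coefficients in the upper indices. -/
theorem sum_choose_mul_choose_upper (p q d : ℕ) :
    ∑ j ∈ Finset.range (d + 1), (d - j + p).choose p * j.choose q =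
      (d + p + 1).choose (p + q + 1) := by
  induction p generalizing d with
  | zero =>
    induction d with
    | zero => cases q <;> simp [Nat.choose_eq_zero_of_lt]
    | succ d ih =>
      simp only [Nat.choose_zero_right, add_zero, zero_add, one_mul] at ih ⊢
      rw [Finset.sum_range_succ, ih, Nat.choose_succ_succ (d + 1) q, add_comm]
  | succ p ihp =>
    induction d with
    | zero => cases q <;> simp [Nat.choose_eq_zero_of_lt]
    | succ d ihd =>
      have key : ∀ j ∈ Finset.range (d + 1),
          (d + 1 - j + (p + 1)).choose (p + 1) * j.choose q =
            (d + 1 - j + p).choose p * j.choose q +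
              (d - j + (p + 1)).choose (p + 1) * j.choose q := by
        intro j hj
        have hj' : j ≤ d := Nat.lt_succ_iff.mp (Finset.mem_range.mp hj)
        rw [← add_assoc, Nat.choose_succ_succ, add_mul,
          show d + 1 - j + p = d - j + (p + 1) by omega]
      have hp := ihp (d + 1)
      rw [Finset.sum_range_succ] at hp ⊢
      rw [Finset.sum_congr rfl key, Finset.sum_add_distrib, ihd]
      simp only [Nat.sub_self, zero_add, Nat.choose_self, one_mul] at hp ⊢
      rw [add_right_comm, hp, show d + 1 + (p + 1) + 1 = (d + 1 + p + 1) + 1 by ring,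
        show p + 1 + q + 1 = (p + q + 1) + 1 by ring, Nat.choose_succ_succ (d + 1 + p + 1),
        show d + (p + 1) + 1 = d + 1 + p + 1 by ring]

theorem prod_Icc_sub_eq_descFactorial (ε : ℂ) (d q : ℕ) :
    ∏ s ∈ Finset.Icc 1 q, (ε * ((d : ℂ) + 1) - ε * (s : ℂ)) = ε ^ q * d.descFactorial q := by
  induction q with
  | zero => simp
  | succ q ih =>
    rw [Finset.prod_Icc_succ_top (Nat.le_add_left 1 q), ih, Nat.descFactorial_succ]
    rcases le_or_gt q d with h | h
    · push_cast [Nat.cast_sub h]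
      ring
    · simp [Nat.descFactorial_of_lt h]

theorem prod_Icc_add_eq_descFactorial (ε : ℂ) (d p : ℕ) :
    ∏ s ∈ Finset.Icc 1 p, (ε * ((d : ℂ) + 1) + ε * (s : ℂ)) =
      ε ^ p * (d + 1 + p).descFactorial p := by
  induction p with
  | zero => simp
  | succ p ih =>
    rw [Finset.prod_Icc_succ_top (Nat.le_add_left 1 p), ih, ← add_assoc,
      Nat.succ_descFactorial_succ]
    push_cast
    ring

theorem succ_mul_descFactorial_mul_descFactorial (p q d : ℕ) :
    (d + 1) * d.descFactorial q * (d + 1 + p).descFactorial p =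
      (p + q + 1).factorial * (d + p + 1).choose (p + q + 1) := by
  rw [← Nat.descFactorial_eq_factorial_mul_choose, ← Nat.succ_descFactorial_succ,
    ← Nat.descFactorial_mul_descFactorial (n := d + p + 1) (k := p) (m := p + q + 1) (by omega)]
  congr 2 <;> omega

/-- Norm of the basis elements (Theorem 5.2, realized on the degree-`d`
representation): `T = a₋^p a₊^p b₊^q b₋^q` acts diagonally on the monomials
`x^(d−j) y^j` with eigenvalues `λ_j`, and the average of the eigenvalues equals
`(p! q!/(p+q+1)!) Π_{s=1}^{q}(ε(d+1) − εs) Π_{s=1}^{p}(ε(d+1) + εs)`. -/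
theorem norm_of_basis_elements (ε : ℝ) (p q d : ℕ) :
    (∀ j ≤ d,
      (aM ε ^ p * aP ^ p * bP ^ q * bM ε ^ q) ((X 0 : P2) ^ (d - j) * (X 1) ^ j)
        = lam ε p q d j • ((X 0 : P2) ^ (d - j) * (X 1) ^ j)) ∧
    (1 / ((d : ℂ) + 1)) * ∑ j ∈ Finset.range (d + 1), lam ε p q d j
      = ((p.factorial : ℂ) * (q.factorial : ℂ) / ((p + q + 1).factorial : ℂ)) *
          (∏ s ∈ Finset.Icc 1 q, ((ε : ℂ) * ((d : ℂ) + 1) - (ε : ℂ) * (s : ℂ))) *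
          (∏ s ∈ Finset.Icc 1 p, ((ε : ℂ) * ((d : ℂ) + 1) + (ε : ℂ) * (s : ℂ))) := by
  constructor
  · intro j _
    rw [Module.End.mul_apply, Module.End.mul_apply, Module.End.mul_apply, bM_pow_apply,
      map_smul, map_smul, map_smul, bP_pow_apply, aP_pow_apply, aM_pow_apply, smul_smul,
      lam_eq_descFactorial, Nat.add_sub_cancel]
    rcases le_or_gt q j with h | h
    · rw [Nat.sub_add_cancel h]
      congr 1
      ring
    · simp [Nat.descFactorial_of_lt h]
  · have hsum : ∑ j ∈ Finset.range (d + 1), lam ε p q d j =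
        (ε : ℂ) ^ (p + q) * (p.factorial * q.factorial) * (d + p + 1).choose (p + q + 1) := by
      rw [← sum_choose_mul_choose_upper, Nat.cast_sum, Finset.mul_sum]
      refine Finset.sum_congr rfl fun j _ => ?_
      rw [lam_eq_descFactorial, Nat.descFactorial_eq_factorial_mul_choose,
        Nat.descFactorial_eq_factorial_mul_choose]
      push_cast
      ring
    have hprod := congrArg (Nat.cast (R := ℂ)) (succ_mul_descFactorial_mul_descFactorial p q d)
    push_cast at hprod
    have hd : (d : ℂ) + 1 ≠ 0 := Nat.cast_add_one_ne_zero d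
    have hf : ((p + q + 1).factorial : ℂ) ≠ 0 := mod_cast Nat.factorial_ne_zero _
    rw [hsum, prod_Icc_sub_eq_descFactorial, prod_Icc_add_eq_descFactorial]
    field_simp
    linear_combination (-(ε : ℂ) ^ (p + q) * p.factorial * q.factorial) * hprod
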